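/- Let C be a monoidal category that is preadditive with tensor product additive in each variable, let (A, η) be a weak ring in C, i.e., η : 𝟙 ⟶ A is such that A ◁ η : A ⟶ A ⊗ A is a split monomorphism, and let z be any object of C. If for some n ≥ 1 the morphism η^{⊗n} ▷ z : 𝟙^{⊗n} ⊗ z ⟶ A^{⊗n} ⊗ z (the n-fold tensor power of η tensored with the identity of z) is the zero morphism, then A ⊗ z is a zero object. -/

import Mathlib

open CategoryTheory CategoryTheory.Limits CategoryTheory.MonoidalCategory

universe v u

variable {C : Type u} [Category.{v} C] [MonoidalCategory C]

/-- The `n`-fold tensor power of an object. -/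
def tpow (A : C) : ℕ → C
  | 0 => 𝟙_ C
  | n + 1 => A ⊗ tpow A n

/-- The `n`-fold tensor power of a morphism. -/
def tpowHom {A B : C} (f : A ⟶ B) : ∀ n : ℕ, tpow A n ⟶ tpow B n
  | 0 => 𝟙 _
  | n + 1 => f ⊗ₘ tpowHom f n

/-- The tensor powers of the unit object are isomorphic to the unit object. -/
def tpowUnitIso : ∀ n : ℕ, tpow (𝟙_ C) n ≅ 𝟙_ C
  | 0 => Iso.refl _
  | n + 1 => λ_ _ ≪≫ tpowUnitIso n

instance isSplitMono_comp {X Y Z : C} (f : X ⟶ Y) (g : Y ⟶ Z) [IsSplitMono f] [IsSplitMono g] :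
    IsSplitMono (f ≫ g) :=
  .mk' { retraction := retraction g ≫ retraction f }

/-- In a weak ring, whiskering any tensor power of the unit by `A` gives a split monomorphism. -/
lemma isSplitMono_whiskerLeft_tpowHom {A : C} (η : 𝟙_ C ⟶ A) [IsSplitMono (A ◁ η)] (n : ℕ) :
    IsSplitMono (A ◁ tpowHom η n) := by
  induction n with
  | zero =>
    exact inferInstanceAs (IsSplitMono ((tensorLeft A).map (𝟙 (𝟙_ C))))
  | succ n ih =>
    have : IsSplitMono ((A ◁ η) ▷ tpow (𝟙_ C) n) :=
      inferInstanceAs (IsSplitMono ((tensorRight (tpow (𝟙_ C) n)).map (A ◁ η)))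
    have : IsSplitMono (A ◁ A ◁ tpowHom η n) :=
      inferInstanceAs (IsSplitMono ((tensorLeft A).map (A ◁ tpowHom η n)))
    have factor : A ◁ (η ⊗ₘ tpowHom η n) =
        (α_ _ _ _).inv ≫ (A ◁ η) ▷ tpow (𝟙_ C) n ≫ (α_ _ _ _).hom ≫ A ◁ A ◁ tpowHom η n := by
      simp [MonoidalCategory.tensorHom_def]
    change IsSplitMono (A ◁ (η ⊗ₘ tpowHom η n))
    rw [factor]
    infer_instance

/-- If `(A, η)` is a weak ring (i.e. `A ◁ η` is a split monomorphism) in a preadditive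
monoidal category with additive tensor, `z` is any object, and for some `n ≥ 1` the
morphism `η^{⊗n} ▷ z` vanishes, then `A ⊗ z` is a zero object. -/
theorem weakRing_tensor_isZero_of_tpowHom_unit_whiskerRight_eq_zero
    [Preadditive C] [MonoidalPreadditive C]
    (A : C) (η : 𝟙_ C ⟶ A) (h : IsSplitMono (A ◁ η)) (z : C)
    (n : ℕ) (hn : 1 ≤ n) (hz : tpowHom η n ▷ z = 0) :
    IsZero (A ⊗ z) := by
  have := isSplitMono_whiskerLeft_tpowHom η n
  have split : IsSplitMono ((A ◁ tpowHom η n) ▷ z) :=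
    inferInstanceAs (IsSplitMono ((tensorRight z).map (A ◁ tpowHom η n)))
  have zero : (A ◁ tpowHom η n) ▷ z = 0 := by
    simp [whisker_assoc, hz]
  have source_isZero : IsZero ((A ⊗ tpow (𝟙_ C) n) ⊗ z) :=
    IsZero.of_mono_eq_zero _ zero
  exact source_isZero.of_iso
    (whiskerRightIso ((ρ_ A).symm ≪≫ whiskerLeftIso A (tpowUnitIso n).symm) z)
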